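/- Let M ≥ 0, N ≥ 1, ℓ ∈ ℂ^N, k ∈ I_{M,N}, j ∈ {1,…,M}, x ∈ ℂ^M and t ∈ ℂ^N. At every point where all factors occurring in the denominators of w_k(x;t), of w_k(x−τe_j;t), and of the right-hand side are nonzero, one has w_k(x − τ e_j; t) = (∏_{s=1}^N [sinh(t_s + x_j + ℓ_s η)/sinh(t_s + x_j − ℓ_s η)] · [sinh(t_s − x_j − ℓ_s η + τ)/sinh(t_s − x_j + ℓ_s η + τ)]) · [sinh(x_j + ξ̃₊)/sinh(x_j − ξ̃₊ − τ)] · [sinh(x_j + ξ̃₋)/sinh(x_j − ξ̃₋ − τ)] · (∏_{i ≠ j} [sinh(x_j + x_i − τ)/sinh(x_j + x_i)] · [sinh(x_j − x_i − τ)/sinh(x_j − x_i)] · [sinh(x_j + x_i − η)/sinh(x_j + x_i + η − τ)] · [sinh(x_j − x_i − η)/sinh(x_j − x_i + η − τ)]) · w_k(x; t), where e_j is the j-th standard basis vector of ℂ^M. -/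

import Mathlib

open Complex MeasureTheory

noncomputable section

namespace BQKZ

/-- `(z;p)_∞ = ∏_{m ≥ 0} (1 - z pᵐ)`; used with `p = q²`. -/
def poch (p z : ℂ) : ℂ := ∏' m : ℕ, (1 - z * p ^ m)

/-- renormalized Jacobi theta `θ(z) = (z;p)_∞ (p z⁻¹;p)_∞`, with `p = q²`. -/
def theta (p z : ℂ) : ℂ := poch p z * poch p (p * z⁻¹)

/-- `q² = e^{2τ}` where `q = e^τ`. -/
def qsq (τ : ℂ) : ℂ := exp (2 * τ)

/-- `ξ̃₊ = ξ₊ - η/2 - τ/2`. -/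
def xiP (τ η ξp : ℂ) : ℂ := ξp - η / 2 - τ / 2

/-- `ξ̃₋ = ξ₋ - η/2`. -/
def xiM (η ξm : ℂ) : ℂ := ξm - η / 2

/-- `n_k(r) = #{i : k i = r}`. -/
def nk {M N : ℕ} (k : Fin M → Fin N) (r : Fin N) : ℕ :=
  (Finset.univ.filter fun i => k i = r).card

/-- `φ_{k;r}`. -/
def phiC (η ξp ξm : ℂ) {N M : ℕ} (ℓ : Fin N → ℂ) (k : Fin M → Fin N) (r : Fin N) : ℂ :=
  (∏ i ∈ Finset.univ.filter fun i : Fin M => k i = r,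
      exp (2 * (η - ξp - ξm) +
        4 * ((M : ℂ) - ((i : ℕ) + 1) - ∑ s ∈ Finset.univ.filter fun s : Fin N => r ≤ s, ℓ s) * η)) *
    exp (-4 * ℓ r * η * ((Finset.univ.filter fun i : Fin M => r < k i).card : ℂ))

/-- `Φ_k(t)`. -/
def PhiF (τ η ξp ξm : ℂ) {N M : ℕ} (ℓ : Fin N → ℂ) (k : Fin M → Fin N) (t : Fin N → ℂ) : ℂ :=
  ∏ r, theta (qsq τ) (exp (2 * t r)) / theta (qsq τ) (phiC η ξp ξm ℓ k r * exp (2 * t r))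

/-- `F(x;t)`. -/
def Ffun (τ η : ℂ) {N : ℕ} (ℓ : Fin N → ℂ) (x : ℂ) (t : Fin N → ℂ) : ℂ :=
  ∏ s, (poch (qsq τ) (exp (-2 * (t s + x - ℓ s * η))) * poch (qsq τ) (exp (-2 * (t s - x - ℓ s * η)))) /
       (poch (qsq τ) (exp (-2 * (t s + x + ℓ s * η))) * poch (qsq τ) (exp (-2 * (t s - x + ℓ s * η))))

/-- `g(x)`. -/
def gfun (τ η ξp ξm : ℂ) (x : ℂ) : ℂ :=
  (poch (qsq τ) (qsq τ * exp (2 * (xiP τ η ξp - x))) * poch (qsq τ) (qsq τ * exp (2 * (xiM η ξm - x)))) /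
  (poch (qsq τ) (exp (2 * (-xiP τ η ξp - x))) * poch (qsq τ) (exp (2 * (-xiM η ξm - x))))

/-- `h(x)`. -/
def hfun (τ η : ℂ) (x : ℂ) : ℂ :=
  (1 - exp (-2 * x)) * poch (qsq τ) (qsq τ * exp (-2 * (x + η))) / poch (qsq τ) (exp (-2 * (x - η)))

/-- `ψ_{k;i}`. -/
def psiC (τ η ξp ξm : ℂ) {N M : ℕ} (ℓ : Fin N → ℂ) (k : Fin M → Fin N) (i : Fin M) : ℂ :=
  xiP τ η ξp + xiM η ξm + τ + ℓ (k i) * η +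
    2 * ((∑ s ∈ Finset.univ.filter fun s : Fin N => k i < s, ℓ s) - (M : ℂ) + ((i : ℕ) + 1)) * η

/-- `u_{k;i}(x;t)`. -/
def ufun (τ η ξp ξm : ℂ) {N M : ℕ} (ℓ : Fin N → ℂ) (k : Fin M → Fin N) (i : Fin M) (x : ℂ)
    (t : Fin N → ℂ) : ℂ :=
  exp (-t (k i)) * theta (qsq τ) (exp (2 * (x - t (k i) + psiC τ η ξp ξm ℓ k i))) *
    (∏ s ∈ Finset.univ.filter fun s : Fin N => k i < s,
      theta (qsq τ) (exp (2 * (x - t s - ℓ s * η)))) /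
    ∏ s ∈ Finset.univ.filter fun s : Fin N => k i ≤ s,
      theta (qsq τ) (exp (2 * (x - t s + ℓ s * η)))

/-- `w_k(x;t)/Φ_k(t)` (the weight function with the `Φ_k` prefactor cancelled). -/
def w0 (τ η ξp ξm : ℂ) {N M : ℕ} (ℓ : Fin N → ℂ) (k : Fin M → Fin N) (x : Fin M → ℂ)
    (t : Fin N → ℂ) : ℂ :=
  (∏ i, Ffun τ η ℓ (x i) t * gfun τ η ξp ξm (x i) * ufun τ η ξp ξm ℓ k i (x i) t) *
    ∏ p ∈ Finset.univ.filter fun p : Fin M × Fin M => p.1 < p.2,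
      hfun τ η (x p.1 + x p.2) * hfun τ η (x p.1 - x p.2)

/-- the weight function `w_k(x;t)`. -/
def wfun (τ η ξp ξm : ℂ) {N M : ℕ} (ℓ : Fin N → ℂ) (k : Fin M → Fin N) (x : Fin M → ℂ)
    (t : Fin N → ℂ) : ℂ :=
  PhiF τ η ξp ξm ℓ k t * w0 τ η ξp ξm ℓ k x t

/-- sign `ε_i = ±1` encoded by a boolean. -/
def sg {M : ℕ} (ε : Fin M → Bool) (i : Fin M) : ℂ := if ε i then 1 else -1

/-- `S_M k`: rearrangements of `k`. -/
def rearr {M N : ℕ} (k : Fin M → Fin N) : Finset (Fin M → Fin N) :=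
  Finset.univ.filter fun m => ∀ r, nk m r = nk k r

/-- `β_k(x;t)`, the coefficients of the boundary Bethe vectors. -/
def betaF (η ξm : ℂ) {N M : ℕ} (ℓ : Fin N → ℂ) (k : Fin M → Fin N) (x : Fin M → ℂ)
    (t : Fin N → ℂ) : ℂ :=
  exp ((∑ i, ((nk k (k i) : ℂ) / 2 - ℓ (k i))) * η) *
    ∑ m ∈ rearr k, ∑ ε : Fin M → Bool,
      (∏ i,
          sg ε i * sinh (sg ε i * x i - xiM η ξm) / sinh (t (m i) + sg ε i * x i - ℓ (m i) * η) *
            (∏ s ∈ Finset.univ.filter fun s : Fin N => m i < s,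
              sinh (t s + sg ε i * x i + ℓ s * η) / sinh (t s + sg ε i * x i - ℓ s * η)) *
            ∏ s, sinh (t s - sg ε i * x i + ℓ s * η) / sinh (t s - sg ε i * x i - ℓ s * η)) *
        (∏ p ∈ Finset.univ.filter fun p : Fin M × Fin M => p.1 < p.2,
          sinh (sg ε p.1 * x p.1 + sg ε p.2 * x p.2 + η) /
            sinh (sg ε p.1 * x p.1 + sg ε p.2 * x p.2)) *
        ∏ p ∈ Finset.univ.filter fun p : Fin M × Fin M => m p.1 < m p.2,
          sinh (sg ε p.1 * x p.1 - sg ε p.2 * x p.2 - η) /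
            sinh (sg ε p.1 * x p.1 - sg ε p.2 * x p.2)

/-- `(ℓ,η) ∈ D^k_{M,N}`. -/
def Dmn (η : ℂ) {N M : ℕ} (ℓ : Fin N → ℂ) (k : Fin M → Fin N) : Prop :=
  ∀ r, (ℓ r * η).re > max 0 (((nk k r : ℝ) - 1) / 2 * η.re)

/-- the (0-based) position `i_k(s;r) = ∑_{s' < r} n_k(s') + s`. -/
def blockIdx {M N : ℕ} (k : Fin M → Fin N) (r : Fin N) (s : ℕ) : ℕ :=
  (∑ s' ∈ Finset.univ.filter fun s' : Fin N => s' < r, nk k s') + s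

/-- `γ ∈ Γ^k_{M,N}`. -/
def Gam (η : ℂ) {N M : ℕ} (ℓ : Fin N → ℂ) (k : Fin M → Fin N) (γ : Fin M → ℂ) : Prop :=
  (∀ i, -(ℓ (k i) * η).re < (γ i).re ∧ (γ i).re < (ℓ (k i) * η).re) ∧
    ∀ r : Fin N, ∀ s : ℕ, s + 1 < nk k r →
      ∀ (h1 : blockIdx k r s < M) (h2 : blockIdx k r (s + 1) < M),
        (γ ⟨blockIdx k r (s + 1), h2⟩).re ≤ (γ ⟨blockIdx k r s, h1⟩).re ∧
          (γ ⟨blockIdx k r (s + 1), h2⟩).re + η.re < (γ ⟨blockIdx k r s, h1⟩).re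

/-- `γ ∈ Γ^k_{M,N;τ}`. -/
def GamTau (τ η : ℂ) {N M : ℕ} (ℓ : Fin N → ℂ) (k : Fin M → Fin N) (γ : Fin M → ℂ) : Prop :=
  Gam η ℓ k γ ∧
    (∀ i, -(ℓ (k i) * η + τ).re < (γ i).re ∧ (γ i).re < (ℓ (k i) * η + τ).re) ∧
    ∀ r : Fin N, ∀ s : ℕ, s + 1 < nk k r →
      ∀ (h1 : blockIdx k r s < M) (h2 : blockIdx k r (s + 1) < M),
        (γ ⟨blockIdx k r (s + 1), h2⟩).re + (η - τ).re < (γ ⟨blockIdx k r s, h1⟩).re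

/-- `Λ₊ = max_s Re(ℓ_s η)`. -/
def Lam (η : ℂ) {N : ℕ} (ℓ : Fin N → ℂ) : ℝ := ⨆ s, (ℓ s * η).re

/-- the sector `Ã`. -/
def Atil (τ η ξp ξm : ℂ) {N : ℕ} (ℓ : Fin N → ℂ) : Set (Fin N → ℂ) :=
  {t | (∀ i j : Fin N, (j : ℕ) = (i : ℕ) + 1 → (t i - t j).re > 2 * Lam η ℓ + max η.re 0) ∧
       ∀ i : Fin N, (i : ℕ) = N - 1 →
         (t i).re > Lam η ℓ + max (max (η / 2).re 0) (max (-xiP τ η ξp).re (-xiM η ξm).re)}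

/-- the sector `Ã_τ`. -/
def AtilTau (τ η ξp ξm : ℂ) {N : ℕ} (ℓ : Fin N → ℂ) : Set (Fin N → ℂ) :=
  {t | (∀ i j : Fin N, (j : ℕ) = (i : ℕ) + 1 →
          (t i - t j).re > 2 * Lam η ℓ + max η.re 0 - τ.re) ∧
       ∀ i : Fin N, (i : ℕ) = N - 1 →
         (t i).re > Lam η ℓ + max (max (η / 2).re 0) (max (-xiP τ η ξp).re (-xiM η ξm).re) - τ.re}

/-- the cone `Q₊ ⊂ ℤ^N` spanned by the simple roots `e_i - e_{i+1}` and `e_N`. -/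
def Qplus {N : ℕ} : Set (Fin N → ℤ) :=
  {α | ∃ β : Fin N → ℕ, ∀ j : Fin N,
    α j = (β j : ℤ) -
      if _h : 0 < (j : ℕ) then
        (β ⟨(j : ℕ) - 1, lt_of_le_of_lt (Nat.sub_le _ _) j.isLt⟩ : ℤ)
      else 0}

/-- the cube `[0,π]^M` over which the contour integrals are iterated. -/
def box (M : ℕ) : Set (Fin M → ℝ) := Set.univ.pi fun _ => Set.Icc (0 : ℝ) Real.pi

/-- the point of the contour `C^γ_k(t)` with parameters `s ∈ [0,π]^M`. -/
def cpt {M N : ℕ} (k : Fin M → Fin N) (γ : Fin M → ℂ) (t : Fin N → ℂ) (s : Fin M → ℝ) :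
    Fin M → ℂ := fun i => t (k i) + γ i + (s i : ℂ) * I

/-- the iterated contour integral over `C^γ_k(t)`. -/
def contourIntegral {M N : ℕ} (k : Fin M → Fin N) (γ : Fin M → ℂ) (t : Fin N → ℂ)
    (f : (Fin M → ℂ) → ℂ) : ℂ :=
  I ^ M * ∫ s in box M, f (cpt k γ t s)

/-- nonvanishing of all denominators occurring in `w_k(x;t)/Φ_k(t)`. -/
def w0DenomOK (τ η ξp ξm : ℂ) {N M : ℕ} (ℓ : Fin N → ℂ) (k : Fin M → Fin N) (x : Fin M → ℂ)
    (t : Fin N → ℂ) : Prop :=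
  (∀ s : Fin N, ∀ i : Fin M,
      poch (qsq τ) (exp (-2 * (t s + x i + ℓ s * η))) ≠ 0 ∧
      poch (qsq τ) (exp (-2 * (t s - x i + ℓ s * η))) ≠ 0) ∧
  (∀ i : Fin M,
      poch (qsq τ) (exp (2 * (-xiP τ η ξp - x i))) ≠ 0 ∧
      poch (qsq τ) (exp (2 * (-xiM η ξm - x i))) ≠ 0) ∧
  (∀ i : Fin M, ∀ s : Fin N, k i ≤ s → theta (qsq τ) (exp (2 * (x i - t s + ℓ s * η))) ≠ 0) ∧
  ∀ i j : Fin M, i < j →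
      poch (qsq τ) (exp (-2 * (x i + x j - η))) ≠ 0 ∧
      poch (qsq τ) (exp (-2 * (x i - x j - η))) ≠ 0

/-- nonvanishing of the theta denominators of `Φ_k(t)`. -/
def PhiDenomOK (τ η ξp ξm : ℂ) {N M : ℕ} (ℓ : Fin N → ℂ) (k : Fin M → Fin N)
    (t : Fin N → ℂ) : Prop :=
  ∀ r, theta (qsq τ) (phiC η ξp ξm ℓ k r * exp (2 * t r)) ≠ 0

/-- nonvanishing of all sinh denominators occurring in `β_m(x;t)` (for any rearrangement `m`). -/
def betaDenomOK (η : ℂ) {N M : ℕ} (ℓ : Fin N → ℂ) (x : Fin M → ℂ) (t : Fin N → ℂ) : Prop :=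
  (∀ s : Fin N, ∀ i : Fin M,
      sinh (t s + x i - ℓ s * η) ≠ 0 ∧ sinh (t s - x i - ℓ s * η) ≠ 0) ∧
  ∀ i j : Fin M, i < j → sinh (x i + x j) ≠ 0 ∧ sinh (x i - x j) ≠ 0

/-- `P(y) = (e^{-2y};q²)_∞`. -/
def PP (τ y : ℂ) : ℂ := poch (qsq τ) (exp (-2 * y))

theorem poch_step (p z : ℂ) (hp : ‖p‖ < 1) : poch p z = (1 - z) * poch p (p * z) := by
  unfold poch
  have hm : Multipliable (fun m : ℕ => (1 - z * p ^ (m + 1))) := by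
    have hs : Summable (fun m : ℕ => ‖-(z * p ^ (m + 1))‖) := by
      have h1 : Summable (fun m : ℕ => (‖z‖ * ‖p‖) * ‖p‖ ^ m) :=
        (summable_geometric_of_lt_one (norm_nonneg _) hp).mul_left _
      refine h1.congr ?_
      intro m
      rw [norm_neg, norm_mul, norm_pow]; ring
    have := multipliable_one_add_of_summable hs
    simpa [sub_eq_add_neg] using this
  have h := tprod_eq_zero_mul' (f := fun m : ℕ => 1 - z * p ^ m) hm
  rw [h]
  simp only [pow_zero, mul_one]
  congr 1
  apply tprod_congr
  intro m
  ring

theorem norm_qsq {τ : ℂ} (hτ : τ.re < 0) : ‖qsq τ‖ < 1 := by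
  unfold qsq
  rw [Complex.norm_exp, Real.exp_lt_one_iff]
  simp
  linarith

theorem one_sub_exp (y : ℂ) : 1 - exp (-2 * y) = 2 * exp (-y) * sinh y := by
  have h1 : exp (-2 * y) = exp (-y) * exp (-y) := by rw [← exp_add]; ring_nf
  have h2 : exp (-y) * exp y = 1 := by rw [← exp_add]; simp
  rw [Complex.sinh, h1]
  linear_combination -h2

theorem PP_step {τ : ℂ} (hτ : τ.re < 0) (y z : ℂ) (hz : z = y - τ) :
    PP τ y = 2 * exp (-y) * sinh y * PP τ z := by
  unfold PP
  rw [poch_step _ _ (norm_qsq hτ), one_sub_exp, hz]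
  congr 2
  unfold qsq
  rw [← exp_add]; ring_nf

/-- generic ratio step: `P(a-τ)/P(c-τ)`. -/
theorem PP_ratio {τ : ℂ} (hτ : τ.re < 0) (a c a' c' : ℂ) (ha' : a' = a - τ) (hc' : c' = c - τ)
    (ha : sinh a ≠ 0) (hc : PP τ c ≠ 0) :
    PP τ a' / PP τ c' = exp (a - c) * (sinh c / sinh a) * (PP τ a / PP τ c) := by
  have h1 := PP_step hτ a a' ha'
  have h2 := PP_step hτ c c' hc'
  have h3 : PP τ c' ≠ 0 := by
    intro h; apply hc; rw [h2, h, mul_zero]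
  have h4 : sinh c ≠ 0 := by
    intro h; apply hc; rw [h2, h]; ring
  rw [h1, h2, exp_sub, exp_neg, exp_neg]
  have := exp_ne_zero a
  have := exp_ne_zero c
  field_simp

theorem PP_ratio' {τ : ℂ} (hτ : τ.re < 0) (a c a' c' : ℂ) (ha' : a' = a + τ) (hc' : c' = c + τ) :
    PP τ a' / PP τ c' = exp (c' - a') * (sinh a' / sinh c') * (PP τ a / PP τ c) := by
  have h1 := PP_step hτ a' a (by rw [ha']; ring)
  have h2 := PP_step hτ c' c (by rw [hc']; ring)
  rw [h1, h2, exp_sub, exp_neg, exp_neg]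
  have := exp_ne_zero a'
  have := exp_ne_zero c'
  by_cases h3 : sinh c' = 0
  · rw [h3]; simp
  by_cases h4 : PP τ c = 0
  · rw [h4]; simp
  field_simp

theorem F_shift {τ : ℂ} (hτ : τ.re < 0) (η : ℂ) {N : ℕ} (ℓ : Fin N → ℂ) (x : ℂ) (t : Fin N → ℂ)
    (h0 : ∀ s, PP τ (t s + x + ℓ s * η) ≠ 0)
    (hd1 : ∀ s : Fin N, sinh (t s + x - ℓ s * η) ≠ 0) :
    Ffun τ η ℓ (x - τ) t =
      (∏ s, sinh (t s + x + ℓ s * η) / sinh (t s + x - ℓ s * η) *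
          (sinh (t s - x - ℓ s * η + τ) / sinh (t s - x + ℓ s * η + τ))) * Ffun τ η ℓ x t := by
  unfold Ffun
  have hPP : ∀ y : ℂ, poch (qsq τ) (exp (-2 * y)) = PP τ y := fun _ => rfl
  rw [← Finset.prod_mul_distrib]
  refine Finset.prod_congr rfl fun s _ => ?_
  simp only [hPP]
  rw [mul_div_mul_comm, mul_div_mul_comm,
    PP_ratio hτ (t s + x - ℓ s * η) (t s + x + ℓ s * η) (t s + (x - τ) - ℓ s * η)
      (t s + (x - τ) + ℓ s * η) (by ring) (by ring) (hd1 s) (h0 s),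
    PP_ratio' hτ (t s - x - ℓ s * η) (t s - x + ℓ s * η) (t s - (x - τ) - ℓ s * η)
      (t s - (x - τ) + ℓ s * η) (by ring) (by ring)]
  have e : exp (t s + x - ℓ s * η - (t s + x + ℓ s * η)) *
      exp (t s - (x - τ) + ℓ s * η - (t s - (x - τ) - ℓ s * η)) = 1 := by
    rw [← exp_add, ← exp_zero]; congr 1; ring
  rw [show t s - (x - τ) - ℓ s * η = t s - x - ℓ s * η + τ by ring,
    show t s - (x - τ) + ℓ s * η = t s - x + ℓ s * η + τ by ring] at *
  linear_combination (sinh (t s + x + ℓ s * η) / sinh (t s + x - ℓ s * η) *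
    (PP τ (t s + x - ℓ s * η) / PP τ (t s + x + ℓ s * η)) *
    (sinh (t s - x - ℓ s * η + τ) / sinh (t s - x + ℓ s * η + τ)) *
    (PP τ (t s - x - ℓ s * η) / PP τ (t s - x + ℓ s * η))) * e

theorem g_eq (τ η ξp ξm x : ℂ) : gfun τ η ξp ξm x =
    (PP τ (x - xiP τ η ξp - τ) / PP τ (x + xiP τ η ξp)) *
    (PP τ (x - xiM η ξm - τ) / PP τ (x + xiM η ξm)) := by
  unfold gfun
  rw [mul_div_mul_comm]
  unfold PP
  congr 3
  · congr 1; unfold qsq; rw [← exp_add]; congr 1; ring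
  · ring_nf
  · congr 1; unfold qsq; rw [← exp_add]; congr 1; ring
  · ring_nf

theorem g_shift {τ : ℂ} (hτ : τ.re < 0) (η ξp ξm x : ℂ)
    (h1 : PP τ (x + xiP τ η ξp) ≠ 0) (h2 : PP τ (x + xiM η ξm) ≠ 0)
    (hd3 : sinh (x - xiP τ η ξp - τ) ≠ 0) (hd4 : sinh (x - xiM η ξm - τ) ≠ 0) :
    gfun τ η ξp ξm (x - τ) = exp (-2 * (xiP τ η ξp + xiM η ξm + τ)) *
      (sinh (x + xiP τ η ξp) / sinh (x - xiP τ η ξp - τ)) *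
      (sinh (x + xiM η ξm) / sinh (x - xiM η ξm - τ)) * gfun τ η ξp ξm x := by
  rw [g_eq, g_eq, PP_ratio hτ (x - xiP τ η ξp - τ) (x + xiP τ η ξp) (x - τ - xiP τ η ξp - τ)
    (x - τ + xiP τ η ξp) (by ring) (by ring) hd3 h1,
    PP_ratio hτ (x - xiM η ξm - τ) (x + xiM η ξm) (x - τ - xiM η ξm - τ)
    (x - τ + xiM η ξm) (by ring) (by ring) hd4 h2]
  have e : exp (-2 * (xiP τ η ξp + xiM η ξm + τ)) = 
     exp (x - xiP τ η ξp - τ - (x + xiP τ η ξp)) * exp (x - xiM η ξm - τ - (x + xiM η ξm)) := by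
    rw [← exp_add]; congr 1; ring
  rw [e]; ring

theorem h_eq (τ η y : ℂ) : hfun τ η y =
    (2 * exp (-y) * sinh y) * (PP τ (y + η - τ) / PP τ (y - η)) := by
  unfold hfun
  rw [one_sub_exp, mul_div_assoc]
  unfold PP
  congr 3
  unfold qsq; rw [← exp_add]; congr 1; ring

theorem h_shift {τ : ℂ} (hτ : τ.re < 0) (η y : ℂ) (h0 : sinh y ≠ 0)
    (h1 : sinh (y + η - τ) ≠ 0) (h2 : PP τ (y - η) ≠ 0) :
    hfun τ η (y - τ) = exp (2 * η) * (sinh (y - τ) / sinh y) *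
      (sinh (y - η) / sinh (y + η - τ)) * hfun τ η y := by
  rw [h_eq, h_eq, PP_ratio hτ (y + η - τ) (y - η) (y - τ + η - τ) (y - τ - η) (by ring) (by ring)
    h1 h2]
  have e : exp (-(y - τ)) * exp (y + η - τ - (y - η)) = exp (2 * η) * exp (-y) := by
    rw [← exp_add, ← exp_add]; congr 1; ring
  have e2 : sinh (y - τ) / sinh y * sinh y = sinh (y - τ) := by field_simp
  linear_combination (2 * sinh (y - τ) * (sinh (y - η) / sinh (y + η - τ)) *
    (PP τ (y + η - τ) / PP τ (y - η))) * e - (exp (2 * η) * exp (-y) * 2 *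
    (sinh (y - η) / sinh (y + η - τ)) * (PP τ (y + η - τ) / PP τ (y - η))) * e2

theorem h_shift' {τ : ℂ} (hτ : τ.re < 0) (η d : ℂ) (h0 : sinh d ≠ 0) :
    hfun τ η (-d + τ) = exp (-(2 * η)) * (sinh (d - τ) / sinh d) *
      (sinh (d - η) / sinh (d + η - τ)) * hfun τ η (-d) := by
  rw [h_eq, h_eq, PP_ratio' hτ (-d + η - τ) (-d - η) (-d + τ + η - τ) (-d + τ - η)
    (by ring) (by ring)]
  have e : exp (-(-d + τ)) * exp (-d + τ - η - (-d + τ + η - τ)) = exp (-(2 * η)) * exp (- -d) := by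
    rw [← exp_add, ← exp_add]; congr 1; ring
  have e2 : sinh (d - τ) / sinh d * sinh d = sinh (d - τ) := by field_simp
  rw [show -d + τ + η - τ = -(d - η) by ring, show -d + τ - η = -(d + η - τ) by ring,
    show -d + τ = -(d - τ) by ring] at *
  simp only [sinh_neg, neg_div_neg_eq] at *
  linear_combination (-2 * sinh (d - τ) * (sinh (d - η) / sinh (d + η - τ)) *
    (PP τ (-d + η - τ) / PP τ (-d - η))) * e + (exp (-(2 * η)) * exp (- -d) * 2 *
    (sinh (d - η) / sinh (d + η - τ)) * (PP τ (-d + η - τ) / PP τ (-d - η))) * e2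

theorem theta_shift {τ : ℂ} (hτ : τ.re < 0) (y z : ℂ) (hz : z = y - τ) :
    theta (qsq τ) (exp (2 * z)) = -exp (2 * z) * theta (qsq τ) (exp (2 * y)) := by
  have key : ∀ a : ℂ, theta (qsq τ) (exp (2 * a)) = PP τ (-a) * PP τ (a - τ) := by
    intro a
    unfold theta PP
    congr 1
    · congr 2; ring
    · congr 1
      unfold qsq
      rw [← exp_neg, ← exp_add]; congr 1; ring
  rw [key, key, PP_step hτ (-z) (-y) (by rw [hz]; ring), PP_step hτ (y - τ) (z - τ) (by rw [hz])]
  rw [← hz, sinh_neg, neg_neg]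
  have e : exp (2 * z) * exp (-z) = exp z := by rw [← exp_add]; congr 1; ring
  linear_combination (2 * sinh z * PP τ (-y) * PP τ (z - τ)) * e

theorem u_shift {τ : ℂ} (hτ : τ.re < 0) (η ξp ξm : ℂ) {N M : ℕ} (ℓ : Fin N → ℂ)
    (k : Fin M → Fin N) (i : Fin M) (x : ℂ) (t : Fin N → ℂ) :
    ufun τ η ξp ξm ℓ k i (x - τ) t = exp (2 * (xiP τ η ξp + xiM η ξm + τ) +
      4 * (((i : ℕ) + 1 : ℂ) - M) * η) * ufun τ η ξp ξm ℓ k i x t := by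
  unfold ufun
  have hset : (Finset.univ.filter fun s : Fin N => k i ≤ s) =
      insert (k i) (Finset.univ.filter fun s : Fin N => k i < s) := by
    ext s
    simp [le_iff_eq_or_lt, eq_comm]
  have hn : k i ∉ (Finset.univ.filter fun s : Fin N => k i < s) := by simp
  rw [hset, Finset.prod_insert hn, Finset.prod_insert hn]
  set S := Finset.univ.filter fun s : Fin N => k i < s with hS
  rw [mul_div_mul_comm, mul_div_mul_comm, ← Finset.prod_div_distrib, ← Finset.prod_div_distrib]
  have hprod : ∏ s ∈ S, theta (qsq τ) (exp (2 * (x - τ - t s - ℓ s * η))) /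
      theta (qsq τ) (exp (2 * (x - τ - t s + ℓ s * η))) =
      exp (∑ s ∈ S, -4 * ℓ s * η) * ∏ s ∈ S, theta (qsq τ) (exp (2 * (x - t s - ℓ s * η))) /
      theta (qsq τ) (exp (2 * (x - t s + ℓ s * η))) := by
    rw [exp_sum, ← Finset.prod_mul_distrib]
    refine Finset.prod_congr rfl fun s _ => ?_
    rw [theta_shift hτ (x - t s - ℓ s * η) (x - τ - t s - ℓ s * η) (by ring),
      theta_shift hτ (x - t s + ℓ s * η) (x - τ - t s + ℓ s * η) (by ring),
      mul_div_mul_comm, neg_div_neg_eq, ← exp_sub]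
    congr 2; ring
  rw [hprod, theta_shift hτ (x - t (k i) + psiC τ η ξp ξm ℓ k i)
      (x - τ - t (k i) + psiC τ η ξp ξm ℓ k i) (by ring),
      theta_shift hτ (x - t (k i) + ℓ (k i) * η) (x - τ - t (k i) + ℓ (k i) * η) (by ring)]
  have hx : exp (2 * (x - τ - t (k i) + psiC τ η ξp ξm ℓ k i)) =
      exp (2 * (x - τ - t (k i) + ℓ (k i) * η)) *
        exp (2 * psiC τ η ξp ξm ℓ k i - 2 * (ℓ (k i) * η)) := by
    rw [← exp_add]; congr 1; ring
  have he : exp (2 * (xiP τ η ξp + xiM η ξm + τ) + 4 * (((i : ℕ) + 1 : ℂ) - M) * η) =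
      exp (2 * psiC τ η ξp ξm ℓ k i - 2 * (ℓ (k i) * η)) * exp (∑ s ∈ S, -4 * ℓ s * η) := by
    rw [← exp_add]; congr 1
    unfold psiC
    rw [← hS, ← Finset.sum_mul, ← Finset.mul_sum]
    ring
  have hY : exp (2 * (x - τ - t (k i) + ℓ (k i) * η)) *
      (exp (2 * (x - τ - t (k i) + ℓ (k i) * η)))⁻¹ = 1 := mul_inv_cancel₀ (exp_ne_zero _)
  rw [hx, he]
  generalize exp (2 * (x - τ - t (k i) + ℓ (k i) * η)) = Y at *
  generalize exp (2 * psiC τ η ξp ξm ℓ k i - 2 * (ℓ (k i) * η)) = E1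
  generalize exp (∑ s ∈ S, -4 * ℓ s * η) = E2
  generalize theta (qsq τ) (exp (2 * (x - t (k i) + psiC τ η ξp ξm ℓ k i))) = T1
  generalize theta (qsq τ) (exp (2 * (x - t (k i) + ℓ (k i) * η))) = T2
  generalize (∏ s ∈ S, theta (qsq τ) (exp (2 * (x - t s - ℓ s * η))) /
    theta (qsq τ) (exp (2 * (x - t s + ℓ s * η)))) = Q
  linear_combination (exp (-t (k i)) * E1 * E2 * T1 * T2⁻¹ * Q) * hY

/-- the pair factor. -/
def RR (τ η a b : ℂ) : ℂ :=
  sinh (a + b - τ) / sinh (a + b) * (sinh (a - b - τ) / sinh (a - b)) *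
    (sinh (a + b - η) / sinh (a + b + η - τ)) * (sinh (a - b - η) / sinh (a - b + η - τ))

theorem pair_prod {M : ℕ} (j : Fin M) (R : Fin M → ℂ) (E : ℂ) :
    (∏ p ∈ Finset.univ.filter fun p : Fin M × Fin M => p.1 < p.2,
      ((if p.2 = j then R p.1 else 1) * (if p.1 = j then E * R p.2 else 1))) =
    E ^ (M - 1 - (j : ℕ)) * ∏ i ∈ Finset.univ.filter fun i : Fin M => i ≠ j, R i := by
  rw [Finset.prod_mul_distrib]
  have h1 : (∏ p ∈ Finset.univ.filter fun p : Fin M × Fin M => p.1 < p.2,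
      (if p.2 = j then R p.1 else 1)) = ∏ a ∈ Finset.univ.filter fun a : Fin M => a < j, R a := by
    rw [Finset.prod_filter, Fintype.prod_prod_type, Finset.prod_filter]
    refine Finset.prod_congr rfl fun a _ => ?_
    rw [Finset.prod_eq_single j]
    · simp
    · intro b _ hb; simp [hb]
    · simp
  have h2 : (∏ p ∈ Finset.univ.filter fun p : Fin M × Fin M => p.1 < p.2,
      (if p.1 = j then E * R p.2 else 1)) =
      ∏ b ∈ Finset.univ.filter fun b : Fin M => j < b, (E * R b) := by
    rw [Finset.prod_filter, Fintype.prod_prod_type_right, Finset.prod_filter]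
    refine Finset.prod_congr rfl fun b _ => ?_
    rw [Finset.prod_eq_single j]
    · simp
    · intro a _ ha; simp [ha]
    · simp
  have h3 : (Finset.univ.filter fun i : Fin M => i ≠ j) =
      (Finset.univ.filter fun a : Fin M => a < j) ∪ (Finset.univ.filter fun b : Fin M => j < b) := by
    ext i
    simp
  have hdis : Disjoint (Finset.univ.filter fun a : Fin M => a < j)
      (Finset.univ.filter fun b : Fin M => j < b) := by
    rw [Finset.disjoint_filter]
    intro a _ h h'
    exact lt_asymm h h'
  have hc : (Finset.univ.filter fun b : Fin M => j < b).card = M - 1 - (j : ℕ) := by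
    have : (Finset.univ.filter fun b : Fin M => j < b) = Finset.Ioi j := by ext; simp
    rw [this, Fin.card_Ioi]
  rw [h1, h2, h3, Finset.prod_union hdis, Finset.prod_mul_distrib, Finset.prod_const, hc]
  ring

/-- functional equation `w_k(x − τ e_j; t) = (⋯) w_k(x;t)`. -/
theorem stmt12 (τ η ξp ξm : ℂ) (hτ : τ.re < 0) (M N : ℕ) (hN : 1 ≤ N)
    (ℓ : Fin N → ℂ) (k : Fin M → Fin N) (hk : Monotone k) (j : Fin M)
    (x : Fin M → ℂ) (t : Fin N → ℂ)
    (hw : w0DenomOK τ η ξp ξm ℓ k x t)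
    (hw' : w0DenomOK τ η ξp ξm ℓ k (fun i => x i - if i = j then τ else 0) t)
    (hΦ : PhiDenomOK τ η ξp ξm ℓ k t)
    (hd1 : ∀ s : Fin N, sinh (t s + x j - ℓ s * η) ≠ 0)
    (hd2 : ∀ s : Fin N, sinh (t s - x j + ℓ s * η + τ) ≠ 0)
    (hd3 : sinh (x j - xiP τ η ξp - τ) ≠ 0) (hd4 : sinh (x j - xiM η ξm - τ) ≠ 0)
    (hd5 : ∀ i : Fin M, i ≠ j →
      sinh (x j + x i) ≠ 0 ∧ sinh (x j - x i) ≠ 0 ∧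
      sinh (x j + x i + η - τ) ≠ 0 ∧ sinh (x j - x i + η - τ) ≠ 0) :
    wfun τ η ξp ξm ℓ k (fun i => x i - if i = j then τ else 0) t =
      (∏ s, sinh (t s + x j + ℓ s * η) / sinh (t s + x j - ℓ s * η) *
          (sinh (t s - x j - ℓ s * η + τ) / sinh (t s - x j + ℓ s * η + τ))) *
        (sinh (x j + xiP τ η ξp) / sinh (x j - xiP τ η ξp - τ)) *
        (sinh (x j + xiM η ξm) / sinh (x j - xiM η ξm - τ)) *
        (∏ i ∈ Finset.univ.filter fun i : Fin M => i ≠ j,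
          sinh (x j + x i - τ) / sinh (x j + x i) *
            (sinh (x j - x i - τ) / sinh (x j - x i)) *
            (sinh (x j + x i - η) / sinh (x j + x i + η - τ)) *
            (sinh (x j - x i - η) / sinh (x j - x i + η - τ))) *
        wfun τ η ξp ξm ℓ k x t := by
  unfold wfun w0
  obtain ⟨hF, hg, -, hh⟩ := hw
  -- single-variable factors
  have hsingle : (∏ i, Ffun τ η ℓ (x i - if i = j then τ else 0) t *
        gfun τ η ξp ξm (x i - if i = j then τ else 0) *
        ufun τ η ξp ξm ℓ k i (x i - if i = j then τ else 0) t) =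
      ((∏ s, sinh (t s + x j + ℓ s * η) / sinh (t s + x j - ℓ s * η) *
          (sinh (t s - x j - ℓ s * η + τ) / sinh (t s - x j + ℓ s * η + τ))) *
        (sinh (x j + xiP τ η ξp) / sinh (x j - xiP τ η ξp - τ)) *
        (sinh (x j + xiM η ξm) / sinh (x j - xiM η ξm - τ)) *
        exp (4 * (((j : ℕ) + 1 : ℂ) - M) * η)) *
      ∏ i, Ffun τ η ℓ (x i) t * gfun τ η ξp ξm (x i) * ufun τ η ξp ξm ℓ k i (x i) t := by
    rw [← Finset.mul_prod_erase _ _ (Finset.mem_univ j),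
      ← Finset.mul_prod_erase Finset.univ
        (fun i => Ffun τ η ℓ (x i) t * gfun τ η ξp ξm (x i) * ufun τ η ξp ξm ℓ k i (x i) t)
        (Finset.mem_univ j), ← mul_assoc]
    congr 1
    · have hg1 : PP τ (x j + xiP τ η ξp) ≠ 0 := by
        have := (hg j).1
        unfold PP
        convert this using 3
        ring
      have hg2 : PP τ (x j + xiM η ξm) ≠ 0 := by
        have := (hg j).2
        unfold PP
        convert this using 3
        ring
      rw [if_pos rfl, F_shift hτ η ℓ (x j) t (fun s => (hF s j).1) hd1,
        g_shift hτ η ξp ξm (x j) hg1 hg2 hd3 hd4, u_shift hτ]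
      have e : exp (-2 * (xiP τ η ξp + xiM η ξm + τ)) *
          exp (2 * (xiP τ η ξp + xiM η ξm + τ) + 4 * (((j : ℕ) + 1 : ℂ) - M) * η) =
          exp (4 * (((j : ℕ) + 1 : ℂ) - M) * η) := by
        rw [← exp_add]; congr 1; ring
      rw [← e]
      ring
    · refine Finset.prod_congr rfl fun i hi => ?_
      have : i ≠ j := Finset.ne_of_mem_erase hi
      rw [if_neg this, sub_zero]
  -- pair factors
  have hpair : (∏ p ∈ Finset.univ.filter fun p : Fin M × Fin M => p.1 < p.2,
      hfun τ η ((x p.1 - if p.1 = j then τ else 0) + (x p.2 - if p.2 = j then τ else 0)) *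
      hfun τ η ((x p.1 - if p.1 = j then τ else 0) - (x p.2 - if p.2 = j then τ else 0))) =
      (exp (4 * η) ^ (M - 1 - (j : ℕ)) *
        ∏ i ∈ Finset.univ.filter fun i : Fin M => i ≠ j, RR τ η (x j) (x i)) *
      ∏ p ∈ Finset.univ.filter fun p : Fin M × Fin M => p.1 < p.2,
        hfun τ η (x p.1 + x p.2) * hfun τ η (x p.1 - x p.2) := by
    rw [← pair_prod j (fun i => RR τ η (x j) (x i)) (exp (4 * η)), ← Finset.prod_mul_distrib]
    refine Finset.prod_congr rfl fun p hp => ?_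
    obtain ⟨a, b⟩ := p
    have hab : a < b := by simpa using hp
    obtain ⟨hp1, hp2⟩ := hh a b hab
    dsimp only
    by_cases hb : b = j
    · subst hb
      have ha : a ≠ b := hab.ne
      obtain ⟨d1, d2, d3, d4⟩ := hd5 a ha
      simp only [if_pos, if_neg ha, sub_zero, mul_one]
      rw [show x a + (x b - τ) = (x b + x a) - τ by ring,
        show x a - (x b - τ) = -(x b - x a) + τ by ring,
        h_shift hτ η (x b + x a) d1 d3 (by rw [add_comm (x b)]; exact hp1),
        h_shift' hτ η (x b - x a) d2, neg_sub, add_comm (x a) (x b)]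
      have e : exp (2 * η) * exp (-(2 * η)) = 1 := by rw [← exp_add]; simp
      unfold RR
      linear_combination (sinh (x b + x a - τ) / sinh (x b + x a) *
        (sinh (x b - x a - τ) / sinh (x b - x a)) *
        (sinh (x b + x a - η) / sinh (x b + x a + η - τ)) *
        (sinh (x b - x a - η) / sinh (x b - x a + η - τ)) *
        hfun τ η (x b + x a) * hfun τ η (x a - x b)) * e
    · by_cases ha : a = j
      · subst ha
        obtain ⟨d1, d2, d3, d4⟩ := hd5 b hb
        simp only [if_pos, if_neg hb, sub_zero, one_mul]
        rw [show x a - τ + x b = (x a + x b) - τ by ring,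
          show x a - τ - x b = (x a - x b) - τ by ring,
          h_shift hτ η (x a + x b) d1 d3 hp1, h_shift hτ η (x a - x b) d2 d4 hp2]
        have e : exp (4 * η) = exp (2 * η) * exp (2 * η) := by
          rw [← exp_add]; congr 1; ring
        rw [e]
        unfold RR
        ring
      · simp only [if_neg ha, if_neg hb, sub_zero, one_mul]
  rw [hsingle, hpair]
  have e : exp (4 * (((j : ℕ) + 1 : ℂ) - M) * η) * exp (4 * η) ^ (M - 1 - (j : ℕ)) = 1 := by
    rw [← exp_nat_mul, ← exp_add]
    convert exp_zero using 2
    have hj := j.isLt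
    obtain ⟨m, hm⟩ : ∃ m, M = (j : ℕ) + 1 + m := ⟨M - ((j : ℕ) + 1), by omega⟩
    have h1 : M - 1 - (j : ℕ) = m := by omega
    have h2 : (M : ℂ) = (j : ℕ) + 1 + m := by exact_mod_cast hm
    rw [h1, h2]; ring
  change _ = _ * (∏ i ∈ Finset.univ.filter fun i : Fin M => i ≠ j, RR τ η (x j) (x i)) * _
  generalize (∏ i ∈ Finset.univ.filter fun i : Fin M => i ≠ j, RR τ η (x j) (x i)) = R
  generalize exp (4 * (((j : ℕ) + 1 : ℂ) - M) * η) = E1 at *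
  generalize exp (4 * η) ^ (M - 1 - (j : ℕ)) = E2 at *
  generalize (∏ i, Ffun τ η ℓ (x i) t * gfun τ η ξp ξm (x i) * ufun τ η ξp ξm ℓ k i (x i) t) = W1
  generalize (∏ p ∈ Finset.univ.filter fun p : Fin M × Fin M => p.1 < p.2,
    hfun τ η (x p.1 + x p.2) * hfun τ η (x p.1 - x p.2)) = W2
  generalize (∏ s, sinh (t s + x j + ℓ s * η) / sinh (t s + x j - ℓ s * η) *
          (sinh (t s - x j - ℓ s * η + τ) / sinh (t s - x j + ℓ s * η + τ))) = S1
  linear_combination (PhiF τ η ξp ξm ℓ k t * S1 *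
    (sinh (x j + xiP τ η ξp) / sinh (x j - xiP τ η ξp - τ)) *
    (sinh (x j + xiM η ξm) / sinh (x j - xiM η ξm - τ)) * R * W1 * W2) * e

end BQKZ
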